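/- Let T(W) = ν̂(|W|)W with ν̂ ∈ C³([0,∞)) such that ν̂'(s)/s is bounded near 0 (hence ν̂'(0) = 0). Define S_φ(ψ) = T(φ+ψ) − T(φ) − DT(φ)ψ. If 4|ν̂'(s)| + |ν̂''(s)|s ≤ c₇ for all s ≥ 0, then |S_φ(ψ₂) − S_φ(ψ₁)| ≤ c₇ |ψ₂ − ψ₁| (|ψ₁| + |ψ₂|) for all φ, ψ₁, ψ₂ ∈ ℝ². -/

import Mathlib

noncomputable section

/-- `T(W) = ν̂(|W|)W` on `ℝ²`. -/
def Tmap (ν : ℝ → ℝ) (W : EuclideanSpace ℝ (Fin 2)) : EuclideanSpace ℝ (Fin 2) :=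
  ν ‖W‖ • W

/-- `S_φ(ψ) = T(φ+ψ) − T(φ) − DT(φ)ψ`. -/
def Smap (ν : ℝ → ℝ) (φ ψ : EuclideanSpace ℝ (Fin 2)) : EuclideanSpace ℝ (Fin 2) :=
  Tmap ν (φ + ψ) - Tmap ν φ - fderiv ℝ (Tmap ν) φ ψ

/-!
Only the second derivative of `T` away from the origin matters: there
`‖D²T(W)‖ ≤ 4|ν̂'(|W|)| + |ν̂''(|W|)||W| ≤ c₇`, and `DT` is continuous at the origin. The mean value
inequality, applied on both sides of the origin when a segment meets it, then shows that `DT` is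
`c₇`-Lipschitz. Since the derivative of `S_φ` at `ψ` is `DT(φ + ψ) - DT(φ)`, of norm at most
`c₇|ψ|`, a second use of the mean value inequality, on a ball, gives the estimate.
-/

open Set Metric Topology Filter InnerProductSpace

theorem continuousAt_zero_comp_norm {E : Type*} [SeminormedAddCommGroup E] {f : ℝ → ℝ}
    (hf : ContinuousWithinAt f (Ici 0) 0) : ContinuousAt (fun x : E => f ‖x‖) 0 := by
  have hnorm : Tendsto (fun x : E => ‖x‖) (𝓝 0) (𝓝[≥] 0) :=
    tendsto_nhdsWithin_iff.2 ⟨tendsto_norm_zero, .of_forall fun _ => norm_nonneg _⟩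
  simpa only [ContinuousAt, norm_zero, Function.comp_def] using hf.tendsto.comp hnorm

section NormedSpace

variable {E F : Type*} [NormedAddCommGroup E] [NormedSpace ℝ E]
  [NormedAddCommGroup F] [NormedSpace ℝ F]

theorem norm_sub_le_of_hasFDerivAt_of_notMem_segment {g : E → F} {D : E → E →L[ℝ] F} {C : ℝ}
    {p x y : E} (hD : ∀ z ≠ p, HasFDerivAt g (D z) z) (hC : ∀ z ≠ p, ‖D z‖ ≤ C)
    (hp : p ∉ segment ℝ x y) : ‖g y - g x‖ ≤ C * ‖y - x‖ :=
  (convex_segment x y).norm_image_sub_le_of_norm_hasFDerivWithin_le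
    (fun z hz => (hD z (ne_of_mem_of_not_mem hz hp)).hasFDerivWithinAt)
    (fun z hz => hC z (ne_of_mem_of_not_mem hz hp))
    (left_mem_segment ℝ x y) (right_mem_segment ℝ x y)

theorem notMem_segment_of_mem_openSegment {p y z : E} (hy : y ≠ p) (hz : z ∈ openSegment ℝ p y) :
    p ∉ segment ℝ z y := by
  intro hp
  have hzp : z ≠ p := fun h => hy (left_mem_openSegment_iff.1 (h ▸ hz)).symm
  have h₁ := dist_add_dist_of_mem_segment hp
  have h₂ := dist_add_dist_of_mem_segment (openSegment_subset_segment ℝ p y hz)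
  have : 0 < dist z p := dist_pos.2 hzp
  rw [dist_comm p z] at h₂
  linarith

theorem norm_sub_le_of_continuousAt_of_hasFDerivAt_ne {g : E → F} {D : E → E →L[ℝ] F} {C : ℝ}
    {p : E} (hg : ContinuousAt g p) (hD : ∀ z ≠ p, HasFDerivAt g (D z) z)
    (hC : ∀ z ≠ p, ‖D z‖ ≤ C) (y : E) : ‖g y - g p‖ ≤ C * ‖y - p‖ := by
  rcases eq_or_ne y p with rfl | hy
  · simp
  have hp : p ∈ closure (openSegment ℝ p y) :=
    segment_subset_closure_openSegment (left_mem_segment ℝ p y)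
  refine ContinuousWithinAt.closure_le (f := fun z => ‖g y - g z‖) (g := fun z => C * ‖y - z‖) hp
    (by fun_prop) (by fun_prop) fun z hz => ?_
  exact norm_sub_le_of_hasFDerivAt_of_notMem_segment hD hC (notMem_segment_of_mem_openSegment hy hz)

theorem norm_image_sub_le_of_norm_hasFDerivAt_le_of_ne {g : E → F} {D : E → E →L[ℝ] F} {C : ℝ}
    {p : E} (hg : ContinuousAt g p) (hD : ∀ z ≠ p, HasFDerivAt g (D z) z)
    (hC : ∀ z ≠ p, ‖D z‖ ≤ C) (x y : E) : ‖g y - g x‖ ≤ C * ‖y - x‖ := by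
  by_cases hp : p ∈ segment ℝ x y
  · have h := norm_sub_le_of_continuousAt_of_hasFDerivAt_ne hg hD hC
    calc ‖g y - g x‖ ≤ ‖g y - g p‖ + ‖g x - g p‖ := by
          simpa only [dist_eq_norm] using dist_triangle_right (g y) (g x) (g p)
      _ ≤ C * ‖y - p‖ + C * ‖x - p‖ := add_le_add (h y) (h x)
      _ = C * ‖y - x‖ := by
          rw [← dist_eq_norm, ← dist_eq_norm, ← dist_eq_norm, dist_comm y p, dist_comm y x,
            ← dist_add_dist_of_mem_segment hp]
          ring
  · exact norm_sub_le_of_hasFDerivAt_of_notMem_segment hD hC hp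

/-- The error `f (x + v) - f x - Df(x) v` of the first-order Taylor expansion of `f` at `x`, as a
function of the increment `v`; `Smap ν` is the case `f = Tmap ν`. -/
def linearizationError (f : E → F) (x v : E) : F :=
  f (x + v) - f x - fderiv ℝ f x v

theorem norm_linearizationError_sub_le {f : E → F} (hf : Differentiable ℝ f) {C : ℝ} (hC : 0 ≤ C)
    {x : E} (hL : ∀ y, ‖fderiv ℝ f y - fderiv ℝ f x‖ ≤ C * ‖y - x‖) (v w : E) :
    ‖linearizationError f x w - linearizationError f x v‖ ≤ C * ‖w - v‖ * max ‖v‖ ‖w‖ := by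
  have key : ‖f (x + w) - f (x + v) - fderiv ℝ f x (x + w - (x + v))‖
      ≤ C * max ‖v‖ ‖w‖ * ‖x + w - (x + v)‖ :=
    (convex_closedBall x (max ‖v‖ ‖w‖)).norm_image_sub_le_of_norm_fderiv_le' (fun y _ => hf y)
      (fun y hy => (hL y).trans (mul_le_mul_of_nonneg_left (mem_closedBall_iff_norm.1 hy) hC))
      (by simp) (by simp)
  have split : linearizationError f x w - linearizationError f x v
      = f (x + w) - f (x + v) - fderiv ℝ f x (w - v) := by
    simp only [linearizationError, map_sub]
    abel
  rw [add_sub_add_left_eq_sub] at key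
  rw [split]
  exact key.trans_eq (by ring)

end NormedSpace

section InnerProductSpace

variable {E : Type*} [NormedAddCommGroup E] [InnerProductSpace ℝ E] {ν ν' ν'' : ℝ → ℝ}

theorem hasFDerivAt_norm {W : E} (hW : W ≠ 0) :
    HasFDerivAt (fun x : E => ‖x‖) (‖W‖⁻¹ • innerSL ℝ W) W := by
  have h := (hasStrictFDerivAt_norm_sq W).hasFDerivAt.sqrt (pow_ne_zero 2 (norm_ne_zero_iff.2 hW))
  simp only [Real.sqrt_sq (norm_nonneg _)] at h
  convert! h using 1
  rw [← Nat.cast_smul_eq_nsmul ℝ, smul_smul]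
  congr 1
  field_simp
  norm_num

theorem hasFDerivAt_comp_norm {f : ℝ → ℝ} {f' : ℝ} {W : E} (hW : W ≠ 0)
    (hf : HasDerivAt f f' ‖W‖) :
    HasFDerivAt (fun x : E => f ‖x‖) ((f' / ‖W‖) • innerSL ℝ W) W := by
  simpa only [smul_smul, div_eq_mul_inv] using! hf.comp_hasFDerivAt W (hasFDerivAt_norm hW)

/-- The radial vector field `W ↦ ν(‖W‖) W` with profile `ν`; `Tmap ν` is the planar case. -/
def radialField (ν : ℝ → ℝ) (W : E) : E :=
  ν ‖W‖ • W

/-- The derivative of `radialField ν` at `W`, where `ν'` is the derivative of `ν`. At `W = 0` the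
second term vanishes, as it should. -/
def radialFieldFDeriv (ν ν' : ℝ → ℝ) (W : E) : E →L[ℝ] E :=
  ν ‖W‖ • ContinuousLinearMap.id ℝ E + (ν' ‖W‖ / ‖W‖) • rankOne ℝ W W

/-- The derivative at `W ≠ 0` of `W ↦ radialFieldFDeriv ν ν' W h`, that is, the second derivative of
`radialField ν` with `h` inserted in one slot; `ν'` and `ν''` are the derivatives of `ν`. -/
def radialFieldSecondFDeriv (ν' ν'' : ℝ → ℝ) (W h : E) : E →L[ℝ] E :=
  (ν' ‖W‖ / ‖W‖) • (rankOne ℝ h W + rankOne ℝ W h + ⟪W, h⟫_ℝ • ContinuousLinearMap.id ℝ E) +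
    ((ν'' ‖W‖ - ν' ‖W‖ / ‖W‖) / ‖W‖ ^ 2 * ⟪W, h⟫_ℝ) • rankOne ℝ W W

theorem radialFieldFDeriv_apply (ν ν' : ℝ → ℝ) (W h : E) :
    radialFieldFDeriv ν ν' W h = ν ‖W‖ • h + (ν' ‖W‖ / ‖W‖ * ⟪W, h⟫_ℝ) • W := by
  simp [radialFieldFDeriv, smul_smul]

theorem hasFDerivAt_radialField_zero (hν₀ : ContinuousWithinAt ν (Ici 0) 0) :
    HasFDerivAt (radialField ν) (radialFieldFDeriv ν ν' (0 : E)) 0 := by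
  have hsmall : (fun x : E => ν ‖x‖ - ν 0) =o[𝓝 0] (fun _ => (1 : ℝ)) :=
    (Asymptotics.isLittleO_one_iff ℝ).2 <| tendsto_sub_nhds_zero_iff.2 <| by
      simpa only [ContinuousAt, norm_zero] using continuousAt_zero_comp_norm (E := E) hν₀
  have h := hsmall.smul_isBigO (Asymptotics.isBigO_refl (fun x : E => x) (𝓝 0))
  rw [hasFDerivAt_iff_isLittleO_nhds_zero]
  simpa [radialField, radialFieldFDeriv, sub_smul] using h

theorem hasFDerivAt_radialField_of_ne_zero {W : E} (hW : W ≠ 0)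
    (hν : HasDerivAt ν (ν' ‖W‖) ‖W‖) :
    HasFDerivAt (radialField ν) (radialFieldFDeriv ν ν' W) W := by
  convert! (hasFDerivAt_comp_norm hW hν).smul (hasFDerivAt_id W) using 1
  ext h
  simp [radialFieldFDeriv, smul_smul]

theorem hasFDerivAt_radialField (hν₀ : ContinuousWithinAt ν (Ici 0) 0)
    (hν : ∀ s > 0, HasDerivAt ν (ν' s) s) (W : E) :
    HasFDerivAt (radialField ν) (radialFieldFDeriv ν ν' W) W := by
  rcases eq_or_ne W 0 with rfl | hW
  · exact hasFDerivAt_radialField_zero hν₀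
  · exact hasFDerivAt_radialField_of_ne_zero hW (hν _ (norm_pos_iff.2 hW))

theorem continuousAt_zero_radialFieldFDeriv_apply (hν₀ : ContinuousWithinAt ν (Ici 0) 0) {C : ℝ}
    (hν' : ∀ s > 0, |ν' s| ≤ C) (h : E) :
    ContinuousAt (fun W => radialFieldFDeriv ν ν' W h) 0 := by
  have hbound (W : E) : ‖(ν' ‖W‖ / ‖W‖ * ⟪W, h⟫_ℝ) • W‖ ≤ C * ‖h‖ * ‖W‖ := by
    rcases eq_or_ne W 0 with rfl | hW
    · simp
    have hr : 0 < ‖W‖ := norm_pos_iff.2 hW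
    calc ‖(ν' ‖W‖ / ‖W‖ * ⟪W, h⟫_ℝ) • W‖ = |ν' ‖W‖| / ‖W‖ * |⟪W, h⟫_ℝ| * ‖W‖ := by
          simp [norm_smul]
      _ ≤ C / ‖W‖ * (‖W‖ * ‖h‖) * ‖W‖ := by
          have hle := hν' _ hr
          have : 0 ≤ C := (abs_nonneg _).trans hle
          gcongr
          exact abs_real_inner_le_norm W h
      _ = C * ‖h‖ * ‖W‖ := by field_simp
  have hrank : ContinuousAt (fun W : E => (ν' ‖W‖ / ‖W‖ * ⟪W, h⟫_ℝ) • W) 0 := by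
    have hlim : Tendsto (fun W : E => C * ‖h‖ * ‖W‖) (𝓝 0) (𝓝 0) :=
      Continuous.tendsto' (by fun_prop) _ _ (by simp)
    simpa [ContinuousAt] using squeeze_zero_norm hbound hlim
  simp only [radialFieldFDeriv_apply]
  exact ((continuousAt_zero_comp_norm hν₀).smul continuousAt_const).add hrank

theorem hasFDerivAt_radialFieldFDeriv_apply {W : E} (hW : W ≠ 0)
    (hν : HasDerivAt ν (ν' ‖W‖) ‖W‖) (hν' : HasDerivAt ν' (ν'' ‖W‖) ‖W‖) (h : E) :
    HasFDerivAt (fun V => radialFieldFDeriv ν ν' V h) (radialFieldSecondFDeriv ν' ν'' W h) W := by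
  have hr : ‖W‖ ≠ 0 := norm_ne_zero_iff.2 hW
  have hquot : HasDerivAt (fun s => ν' s / s) ((ν'' ‖W‖ - ν' ‖W‖ / ‖W‖) / ‖W‖) ‖W‖ := by
    convert! hν'.div (hasDerivAt_id ‖W‖) hr using 1
    simp only [id_eq]
    field_simp
  have hinner : HasFDerivAt (fun V : E => ⟪V, h⟫_ℝ) (innerSL ℝ h) W := by
    simpa only [innerSL_apply_apply, real_inner_comm] using! (innerSL ℝ h).hasFDerivAt (x := W)
  have hsum := ((hasFDerivAt_comp_norm hW hν).smul_const h).add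
    (((hasFDerivAt_comp_norm hW hquot).mul hinner).smul (hasFDerivAt_id W))
  simp only [radialFieldFDeriv_apply]
  convert! hsum using 1
  ext k
  simp only [radialFieldSecondFDeriv, smul_add, add_apply, smul_apply, rankOne_apply,
    ContinuousLinearMap.id_apply, Pi.mul_apply, id_eq, ContinuousLinearMap.smulRight_apply,
    coe_innerSL_apply, smul_eq_mul]
  module

theorem norm_radialFieldSecondFDeriv_le (ν' ν'' : ℝ → ℝ) {W : E} (hW : W ≠ 0) (h : E) :
    ‖radialFieldSecondFDeriv ν' ν'' W h‖ ≤ (4 * |ν' ‖W‖| + |ν'' ‖W‖| * ‖W‖) * ‖h‖ := by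
  have : ‖W‖ ≠ 0 := norm_ne_zero_iff.2 hW
  have hinner : |⟪W, h⟫_ℝ| ≤ ‖W‖ * ‖h‖ := abs_real_inner_le_norm W h
  have hsym : ‖rankOne ℝ h W + rankOne ℝ W h + ⟪W, h⟫_ℝ • ContinuousLinearMap.id ℝ E‖
      ≤ 3 * (‖W‖ * ‖h‖) := by
    have hid : ‖⟪W, h⟫_ℝ • ContinuousLinearMap.id ℝ E‖ ≤ ‖W‖ * ‖h‖ := by
      rw [norm_smul]
      exact (mul_le_of_le_one_right (norm_nonneg _) ContinuousLinearMap.norm_id_le).trans hinner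
    refine norm_add₃_le.trans ?_
    rw [norm_rankOne, norm_rankOne, mul_comm ‖h‖]
    linarith
  have hdiff : |ν'' ‖W‖ - ν' ‖W‖ / ‖W‖| ≤ |ν'' ‖W‖| + |ν' ‖W‖| / ‖W‖ := by
    simpa only [abs_div, abs_norm] using abs_sub (ν'' ‖W‖) (ν' ‖W‖ / ‖W‖)
  calc ‖radialFieldSecondFDeriv ν' ν'' W h‖
      ≤ |ν' ‖W‖| / ‖W‖ *
          ‖rankOne ℝ h W + rankOne ℝ W h + ⟪W, h⟫_ℝ • ContinuousLinearMap.id ℝ E‖ +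
        |ν'' ‖W‖ - ν' ‖W‖ / ‖W‖| / ‖W‖ ^ 2 * |⟪W, h⟫_ℝ| * (‖W‖ * ‖W‖) := by
        refine (norm_add_le _ _).trans_eq ?_
        simp only [norm_smul, norm_rankOne, norm_mul, norm_div, norm_pow, Real.norm_eq_abs,
          abs_norm]
    _ ≤ |ν' ‖W‖| / ‖W‖ * (3 * (‖W‖ * ‖h‖)) +
        (|ν'' ‖W‖| + |ν' ‖W‖| / ‖W‖) / ‖W‖ ^ 2 * (‖W‖ * ‖h‖) * (‖W‖ * ‖W‖) := by gcongr
    _ = (4 * |ν' ‖W‖| + |ν'' ‖W‖| * ‖W‖) * ‖h‖ := by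
        field_simp
        ring

theorem norm_radialFieldFDeriv_sub_le (hν₀ : ContinuousWithinAt ν (Ici 0) 0)
    (hν : ∀ s > 0, HasDerivAt ν (ν' s) s) (hν' : ∀ s > 0, HasDerivAt ν' (ν'' s) s) {c : ℝ}
    (hc : ∀ s > 0, 4 * |ν' s| + |ν'' s| * s ≤ c) (V W : E) :
    ‖radialFieldFDeriv ν ν' W - radialFieldFDeriv ν ν' V‖ ≤ c * ‖W - V‖ := by
  have hν'_le (s : ℝ) (hs : 0 < s) : |ν' s| ≤ c := by
    have := hc s hs
    have : 0 ≤ |ν'' s| * s := by positivity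
    linarith [abs_nonneg (ν' s)]
  have hc₀ : 0 ≤ c := (abs_nonneg _).trans (hν'_le 1 one_pos)
  refine ContinuousLinearMap.opNorm_le_bound _ (by positivity) fun h => ?_
  calc ‖radialFieldFDeriv ν ν' W h - radialFieldFDeriv ν ν' V h‖ ≤ c * ‖h‖ * ‖W - V‖ :=
        norm_image_sub_le_of_norm_hasFDerivAt_le_of_ne
          (continuousAt_zero_radialFieldFDeriv_apply hν₀ hν'_le h)
          (fun Z hZ => hasFDerivAt_radialFieldFDeriv_apply hZ (hν _ (norm_pos_iff.2 hZ))
            (hν' _ (norm_pos_iff.2 hZ)) h)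
          (fun Z hZ => (norm_radialFieldSecondFDeriv_le ν' ν'' hZ h).trans <| by
            gcongr
            exact hc _ (norm_pos_iff.2 hZ))
          V W
    _ = c * ‖W - V‖ * ‖h‖ := by ring

theorem S_diff_second_arg_general (hν₀ : ContinuousWithinAt ν (Ici 0) 0)
    (hν : ∀ s > 0, HasDerivAt ν (ν' s) s) (hν' : ∀ s > 0, HasDerivAt ν' (ν'' s) s) {c : ℝ}
    (hc : ∀ s > 0, 4 * |ν' s| + |ν'' s| * s ≤ c) (φ ψ₁ ψ₂ : E) :
    ‖linearizationError (radialField ν) φ ψ₂ - linearizationError (radialField ν) φ ψ₁‖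
      ≤ c * ‖ψ₂ - ψ₁‖ * (‖ψ₁‖ + ‖ψ₂‖) := by
  have hc₀ : 0 ≤ c := le_trans (by positivity) (hc 1 one_pos)
  have hT (W : E) := hasFDerivAt_radialField hν₀ hν W
  have hL (W : E) :
      ‖fderiv ℝ (radialField ν) W - fderiv ℝ (radialField ν) φ‖ ≤ c * ‖W - φ‖ := by
    simpa only [(hT _).fderiv] using norm_radialFieldFDeriv_sub_le hν₀ hν hν' hc φ W
  refine (norm_linearizationError_sub_le (fun W => (hT W).differentiableAt) hc₀ hL ψ₁ ψ₂).trans ?_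
  gcongr
  exact max_le_add_of_nonneg (norm_nonneg _) (norm_nonneg _)

end InnerProductSpace

/-- `|S_φ(ψ₂) − S_φ(ψ₁)| ≤ c₇|ψ₂ − ψ₁|(|ψ₁| + |ψ₂|)`. -/
theorem S_diff_second_arg (ν : ℝ → ℝ) (ctil c₇ : ℝ)
    (hC3 : ContDiff ℝ 3 ν)
    (hb : ∀ s > (0:ℝ), |deriv ν s| / s ≤ ctil)
    (hc7 : 0 ≤ c₇)
    (h7 : ∀ s ≥ (0:ℝ), 4 * |deriv ν s| + |deriv (deriv ν) s| * s ≤ c₇) :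
    ∀ φ ψ₁ ψ₂ : EuclideanSpace ℝ (Fin 2),
      ‖Smap ν φ ψ₂ - Smap ν φ ψ₁‖ ≤ c₇ * ‖ψ₂ - ψ₁‖ * (‖ψ₁‖ + ‖ψ₂‖) := by
  exact S_diff_second_arg_general hC3.continuous.continuousWithinAt
    (fun s _ => (hC3.differentiable (by norm_num) s).hasDerivAt)
    (fun s _ => ((hC3.of_le (by norm_num)).differentiable_deriv_two s).hasDerivAt)
    (fun s hs => h7 s hs.le)

end
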